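/- arXiv:1510.06785 — 2 statements merged into one kernel-verified Lean document; each statement's English description precedes it below -/
import Mathlib

section
/- Let c ≥ 0 and consider the uniform weights w = (c/N)𝟙. Then λ₂(L(w)) = 2c/N if and only if for all u₁, u₂ ∈ ℝ^N with u₁ᵀ𝟙 = u₂ᵀ𝟙 = 0 one has u₁ᵀL₁u₁ + u₂ᵀL₂u₂ ≥ (c/N)‖u₁ + u₂‖². -/
open Matrix

/-- The supra-Laplacian of a two-layer multiplex with layer Laplacians `L₁`, `L₂`
and one-to-one inter-layer weights `w`: the block matrix
`[[L₁ + W, −W], [−W, L₂ + W]]` with `W = diag w`. -/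
noncomputable def supraLaplacian {N : ℕ} (L₁ L₂ : Matrix (Fin N) (Fin N) ℝ)
    (w : Fin N → ℝ) : Matrix (Fin N ⊕ Fin N) (Fin N ⊕ Fin N) ℝ :=
  Matrix.fromBlocks (L₁ + Matrix.diagonal w) (-Matrix.diagonal w)
    (-Matrix.diagonal w) (L₂ + Matrix.diagonal w)

/-- Algebraic connectivity: the minimum of `vᵀ M v` over unit vectors `v`
orthogonal to the all-ones vector (the minimum is attained, so it equals the inf). -/
noncomputable def lambda2 {n : Type*} [Fintype n] (M : Matrix n n ℝ) : ℝ :=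
  sInf {x : ℝ | ∃ v : n → ℝ, v ⬝ᵥ v = 1 ∧ v ⬝ᵥ (fun _ => 1) = 0 ∧ x = v ⬝ᵥ M *ᵥ v}

theorem supra_quad {N : ℕ} (L₁ L₂ : Matrix (Fin N) (Fin N) ℝ) (k : ℝ) (a b : Fin N → ℝ) :
    Sum.elim a b ⬝ᵥ (supraLaplacian L₁ L₂ (fun _ => k)) *ᵥ Sum.elim a b =
      a ⬝ᵥ L₁ *ᵥ a + b ⬝ᵥ L₂ *ᵥ b - k * ((a + b) ⬝ᵥ (a + b))
        + 2 * k * (a ⬝ᵥ a + b ⬝ᵥ b) := by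
  have hd : ∀ x : Fin N → ℝ, (Matrix.diagonal (fun _ : Fin N => k)) *ᵥ x = k • x := by
    intro x
    ext i
    simp [Matrix.mulVec_diagonal]
  unfold supraLaplacian
  rw [Matrix.fromBlocks_mulVec, Sum.elim_comp_inl, Sum.elim_comp_inr,
    sumElim_dotProduct_sumElim]
  simp only [Matrix.add_mulVec, Matrix.neg_mulVec, hd, dotProduct_add, add_dotProduct,
    dotProduct_neg, dotProduct_smul, smul_eq_mul]
  rw [dotProduct_comm b a]
  ring

theorem shift_quad {N : ℕ} (L : Matrix (Fin N) (Fin N) ℝ) (hL : L.PosSemidef)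
    (h1 : L *ᵥ (fun _ => 1) = 0) (t : ℝ) (a : Fin N → ℝ) :
    (a + t • (fun _ => (1 : ℝ))) ⬝ᵥ L *ᵥ (a + t • (fun _ => (1 : ℝ))) = a ⬝ᵥ L *ᵥ a := by
  have hT : Lᵀ = L := by
    have := hL.1
    rwa [Matrix.IsHermitian, Matrix.conjTranspose_eq_transpose_of_trivial] at this
  have h2 : (fun _ => (1 : ℝ)) ⬝ᵥ L *ᵥ a = 0 := by
    rw [Matrix.dotProduct_mulVec, ← Matrix.mulVec_transpose, hT, h1, zero_dotProduct]
  rw [Matrix.mulVec_add, Matrix.mulVec_smul, h1, smul_zero, add_zero, add_dotProduct,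
    smul_dotProduct, h2, smul_zero, add_zero]

theorem psd_quad {N : ℕ} (L : Matrix (Fin N) (Fin N) ℝ) (hL : L.PosSemidef)
    (a : Fin N → ℝ) : 0 ≤ a ⬝ᵥ L *ᵥ a := by
  simpa using hL.dotProduct_mulVec_nonneg a

theorem stmt7 {N : ℕ} (hN : 1 ≤ N)
    (L₁ L₂ : Matrix (Fin N) (Fin N) ℝ)
    (hL₁ : L₁.PosSemidef) (hL₂ : L₂.PosSemidef)
    (hL₁1 : L₁ *ᵥ (fun _ => 1) = 0) (hL₂1 : L₂ *ᵥ (fun _ => 1) = 0)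
    (c : ℝ) (hc : 0 ≤ c) :
    lambda2 (supraLaplacian L₁ L₂ (fun _ => c / N)) = 2 * c / N ↔
      (∀ u₁ u₂ : Fin N → ℝ, u₁ ⬝ᵥ (fun _ => 1) = 0 → u₂ ⬝ᵥ (fun _ => 1) = 0 →
        u₁ ⬝ᵥ L₁ *ᵥ u₁ + u₂ ⬝ᵥ L₂ *ᵥ u₂ ≥ (c / N) * ((u₁ + u₂) ⬝ᵥ (u₁ + u₂))) := by
  have hN0 : (0 : ℝ) < N := by exact_mod_cast hN
  have hone : (fun _ : Fin N => (1 : ℝ)) ⬝ᵥ (fun _ => 1) = N := by simp [dotProduct]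
  have hk : 0 ≤ c / N := by positivity
  rw [mul_div_assoc]
  generalize c / (N : ℝ) = k at hk ⊢
  have hsplit : ∀ v : Fin N ⊕ Fin N → ℝ, ∃ a b : Fin N → ℝ, v = Sum.elim a b :=
    fun v => ⟨v ∘ Sum.inl, v ∘ Sum.inr, by simp⟩
  have hsum : ∀ a b : Fin N → ℝ, Sum.elim a b ⬝ᵥ (fun _ => (1 : ℝ)) =
      a ⬝ᵥ (fun _ => 1) + b ⬝ᵥ (fun _ => 1) := by
    intro a b
    simp [dotProduct]
  unfold lambda2
  constructor
  · intro h u₁ u₂ h₁ h₂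
    set t := u₁ ⬝ᵥ u₁ + u₂ ⬝ᵥ u₂ with ht
    have e1 : 0 ≤ u₁ ⬝ᵥ u₁ := by
      simpa using dotProduct_star_self_nonneg u₁
    have e2 : 0 ≤ u₂ ⬝ᵥ u₂ := by
      simpa using dotProduct_star_self_nonneg u₂
    rcases (add_nonneg e1 e2).eq_or_lt with h0 | h0
    · have z1 : u₁ = 0 := dotProduct_self_eq_zero.1 (by linarith)
      have z2 : u₂ = 0 := dotProduct_self_eq_zero.1 (by linarith)
      simp [z1, z2]
    · rw [← ht] at h0
      set s := (√t)⁻¹ with hs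
      have hss : s * s * t = 1 := by
        have : √t * √t = t := Real.mul_self_sqrt h0.le
        have hne : √t ≠ 0 := (Real.sqrt_pos.2 h0).ne'
        rw [hs, ← mul_inv, this, inv_mul_cancel₀ h0.ne']
      have hspos : 0 < s * s := by
        have : 0 < s := inv_pos.2 (Real.sqrt_pos.2 h0)
        positivity
      have hle : 2 * k ≤ Sum.elim (s • u₁) (s • u₂) ⬝ᵥ
          (supraLaplacian L₁ L₂ (fun _ => k)) *ᵥ Sum.elim (s • u₁) (s • u₂) := by
        rw [← h]
        apply csInf_le
        · refine ⟨0, ?_⟩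
          rintro x ⟨v, -, -, rfl⟩
          obtain ⟨a, b, rfl⟩ := hsplit v
          rw [supra_quad]
          have q1 := psd_quad L₁ hL₁ a
          have q2 := psd_quad L₂ hL₂ b
          have q3 : 0 ≤ (a - b) ⬝ᵥ (a - b) := by
            simpa using dotProduct_star_self_nonneg (a - b)
          have q4 := mul_nonneg hk q3
          simp only [add_dotProduct, dotProduct_add, sub_dotProduct, dotProduct_sub] at q4 ⊢
          nlinarith
        · refine ⟨_, ?_, ?_, rfl⟩
          · rw [sumElim_dotProduct_sumElim]
            simp only [smul_dotProduct, dotProduct_smul, smul_eq_mul]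
            rw [← hss, ht]
            ring
          · rw [hsum, smul_dotProduct, smul_dotProduct, h₁, h₂]
            simp
      rw [supra_quad, ← smul_add] at hle
      simp only [Matrix.mulVec_smul, smul_dotProduct, dotProduct_smul, smul_eq_mul] at hle
      have h3 : 0 ≤ (s * s) * (u₁ ⬝ᵥ L₁ *ᵥ u₁ + u₂ ⬝ᵥ L₂ *ᵥ u₂
          - k * ((u₁ + u₂) ⬝ᵥ (u₁ + u₂))) := by
        have h4 : s * (s * u₁ ⬝ᵥ u₁) + s * (s * u₂ ⬝ᵥ u₂) = 1 := by
          rw [← hss, ht]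
          ring
        rw [h4] at hle
        linarith
      have := nonneg_of_mul_nonneg_right h3 hspos
      linarith
  · intro h
    have main : ∀ a b : Fin N → ℝ, a ⬝ᵥ (fun _ => 1) + b ⬝ᵥ (fun _ => 1) = 0 →
        0 ≤ a ⬝ᵥ L₁ *ᵥ a + b ⬝ᵥ L₂ *ᵥ b - k * ((a + b) ⬝ᵥ (a + b)) := by
      intro a b hab
      set t := (b ⬝ᵥ (fun _ => (1 : ℝ))) / N with ht
      have htN : t * N = b ⬝ᵥ (fun _ => (1 : ℝ)) := div_mul_cancel₀ _ hN0.ne'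
      have := h (a + t • (fun _ => (1 : ℝ))) (b + (-t) • (fun _ => (1 : ℝ)))
        (by rw [add_dotProduct, smul_dotProduct, hone, smul_eq_mul, htN]; exact hab)
        (by rw [add_dotProduct, smul_dotProduct, hone, smul_eq_mul, neg_mul, htN]; ring)
      rw [shift_quad L₁ hL₁ hL₁1, shift_quad L₂ hL₂ hL₂1] at this
      have e : a + t • (fun _ => (1 : ℝ)) + (b + (-t) • (fun _ => (1 : ℝ))) = a + b := by
        rw [neg_smul]
        abel
      rw [e] at this
      linarith
    apply IsLeast.csInf_eq
    constructor
    · set s := (√(2 * N))⁻¹ with hs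
      have hss : s * s * (2 * N) = 1 := by
        have : √(2 * (N : ℝ)) * √(2 * N) = 2 * N := Real.mul_self_sqrt (by positivity)
        rw [hs, ← mul_inv, this, inv_mul_cancel₀ (by positivity)]
      refine ⟨Sum.elim (s • (fun _ => (1 : ℝ))) ((-s) • (fun _ => (1 : ℝ))), ?_, ?_, ?_⟩
      · rw [sumElim_dotProduct_sumElim]
        simp only [smul_dotProduct, dotProduct_smul, smul_eq_mul, hone]
        linarith
      · rw [hsum]
        simp only [smul_dotProduct, smul_eq_mul, hone]
        ring
      · rw [supra_quad]
        simp only [Matrix.mulVec_smul, hL₁1, hL₂1, smul_zero, dotProduct_zero, neg_smul,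
          add_neg_cancel, smul_dotProduct, dotProduct_smul, smul_eq_mul, neg_dotProduct,
          dotProduct_neg, Matrix.mulVec_neg, hone, neg_zero]
        linear_combination (-2 * k) * hss
    · rintro x ⟨v, hv1, hv2, rfl⟩
      obtain ⟨a, b, rfl⟩ := hsplit v
      rw [hsum] at hv2
      rw [sumElim_dotProduct_sumElim] at hv1
      rw [supra_quad, hv1]
      have := main a b hv2
      linarith
end

section
/- Assume N ≥ 2 and that the two layers are identical, L₁ = L₂ = L₀. Then for every nonnegative weight vector w ∈ ℝ^N with Σᵢ wᵢ = c, the algebraic connectivity of the supra-Laplacian satisfies λ₂(L(w)) ≤ min{2c/N, λ₂(L₀)}; in particular, increasing the budget beyond (N/2)·λ₂(L₀) cannot increase the algebraic connectivity regardless of the weight allocation. -/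
open Matrix

lemma supra_quad_s10 {N : ℕ} (L₀ : Matrix (Fin N) (Fin N) ℝ) (w x y : Fin N → ℝ) :
    (Sum.elim x y) ⬝ᵥ (supraLaplacian L₀ L₀ w) *ᵥ (Sum.elim x y)
      = x ⬝ᵥ L₀ *ᵥ x + y ⬝ᵥ L₀ *ᵥ y + ∑ i, w i * (x i - y i) ^ 2 := by
  have h : ∑ i, w i * (x i - y i) ^ 2
      = x ⬝ᵥ diagonal w *ᵥ x - x ⬝ᵥ diagonal w *ᵥ y - y ⬝ᵥ diagonal w *ᵥ x
        + y ⬝ᵥ diagonal w *ᵥ y := by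
    simp only [dotProduct, mulVec_diagonal, ← Finset.sum_sub_distrib, ← Finset.sum_add_distrib]
    exact Finset.sum_congr rfl fun i _ => by ring
  rw [h, supraLaplacian, fromBlocks_mulVec]
  simp only [Sum.elim_comp_inl, Sum.elim_comp_inr, sumElim_dotProduct_sumElim, add_mulVec,
    neg_mulVec, dotProduct_add, dotProduct_neg]
  ring

lemma lambda2_supra_le {N : ℕ} (L₀ : Matrix (Fin N) (Fin N) ℝ) (hL₀ : L₀.PosSemidef)
    (w : Fin N → ℝ) (hw : ∀ i, 0 ≤ w i) (x y : Fin N → ℝ)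
    (h1 : x ⬝ᵥ x + y ⬝ᵥ y = 1) (h0 : ∑ i, x i + ∑ i, y i = 0) :
    lambda2 (supraLaplacian L₀ L₀ w)
      ≤ x ⬝ᵥ L₀ *ᵥ x + y ⬝ᵥ L₀ *ᵥ y + ∑ i, w i * (x i - y i) ^ 2 := by
  have hp : ∀ x : Fin N → ℝ, 0 ≤ x ⬝ᵥ L₀ *ᵥ x := fun x => by
    simpa using hL₀.dotProduct_mulVec_nonneg x
  apply csInf_le
  · refine ⟨0, ?_⟩
    rintro _ ⟨v, -, -, rfl⟩
    rw [← Sum.elim_comp_inl_inr v, supra_quad_s10]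
    have := Finset.sum_nonneg (s := Finset.univ) fun i _ =>
      mul_nonneg (hw i) (sq_nonneg ((v ∘ Sum.inl) i - (v ∘ Sum.inr) i))
    linarith [hp (v ∘ Sum.inl), hp (v ∘ Sum.inr)]
  · refine ⟨Sum.elim x y, ?_, ?_, (supra_quad_s10 L₀ w x y).symm⟩
    · rw [sumElim_dotProduct_sumElim, h1]
    · simpa [dotProduct] using h0

theorem stmt10 {N : ℕ} (hN : 2 ≤ N)
    (L₀ : Matrix (Fin N) (Fin N) ℝ)
    (hL₀ : L₀.PosSemidef) (hL₀1 : L₀ *ᵥ (fun _ => 1) = 0)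
    (w : Fin N → ℝ) (hw : ∀ i, 0 ≤ w i) (c : ℝ) (hc : c = ∑ i, w i) :
    lambda2 (supraLaplacian L₀ L₀ w) ≤ min (2 * c / N) (lambda2 L₀) := by
  have hN0 : (0 : ℝ) < N := by
    have : 0 < N := by omega
    exact_mod_cast this
  apply le_min
  · obtain ⟨a, ha⟩ : ∃ a : ℝ, a * a = 1 / (2 * N) :=
      ⟨√(1 / (2 * N)), Real.mul_self_sqrt (by positivity)⟩
    have hz : ∀ b : ℝ, L₀ *ᵥ (fun _ => b) = 0 := fun b => by
      have : (fun _ : Fin N => b) = b • (fun _ => (1 : ℝ)) := by ext; simp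
      rw [this, mulVec_smul, hL₀1, smul_zero]
    have := lambda2_supra_le L₀ hL₀ w hw (fun _ => a) (fun _ => -a)
      (by simp [dotProduct, ha]; field_simp; norm_num) (by simp)
    rw [hz, hz, ← Finset.sum_mul, ← hc] at this
    refine this.trans (le_of_eq ?_)
    have h4 : (a - -a) ^ 2 = 4 * (a * a) := by ring
    rw [h4, ha]
    simp
    field_simp
    norm_num
  · obtain ⟨s, hs⟩ : ∃ s : ℝ, s * s = 1 / 2 := ⟨√(1 / 2), Real.mul_self_sqrt (by norm_num)⟩
    apply le_csInf
    · let i : Fin N := ⟨0, by omega⟩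
      let j : Fin N := ⟨1, by omega⟩
      have hij : i ≠ j := by simp [i, j]
      refine ⟨_, Pi.single i s - Pi.single j s, ?_, ?_, rfl⟩
      · simp [sub_dotProduct, dotProduct_sub, hij, hij.symm, hs]
        norm_num
      · simp [sub_dotProduct]
    · rintro _ ⟨v, hv1, hv0, rfl⟩
      have hsum : ∑ i, v i = 0 := by simpa [dotProduct] using hv0
      have := lambda2_supra_le L₀ hL₀ w hw (s • v) (s • v)
        (by simp only [smul_dotProduct, dotProduct_smul, hv1, smul_eq_mul]; linarith)
        (by simp [← Finset.mul_sum, hsum])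
      simp only [smul_dotProduct, dotProduct_smul, mulVec_smul, smul_eq_mul, sub_self] at this
      rw [← mul_assoc, hs] at this
      simp at this
      linarith
end
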